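/- arXiv:2112.13024 — 3 statements merged into one kernel-verified Lean document; each statement's English description precedes it below -/
import Mathlib

section
/- If T_1 and T_2 are trees each of order at least 3, then μ(T_1 □ T_2) ≥ μ(T_1)·μ(T_2). -/
open SimpleGraph

/-- Two vertices `u v ∈ X` are `X`-visible in `G`: there is a shortest `u,v`-path
whose only vertices in `X` are `u` and `v`. -/
def VisiblePair {V : Type*} (G : SimpleGraph V) (X : Set V) (u v : V) : Prop :=
  ∃ p : G.Walk u v, p.IsPath ∧ p.length = G.dist u v ∧
    ∀ w ∈ p.support, w ∈ X → w = u ∨ w = v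

/-- `X` is a mutual-visibility set of `G`. -/
def IsMVSet {V : Type*} (G : SimpleGraph V) (X : Set V) : Prop :=
  ∀ u ∈ X, ∀ v ∈ X, u ≠ v → VisiblePair G X u v

/-- `X` is an independent set of `G`. -/
def IsIndep {V : Type*} (G : SimpleGraph V) (X : Set V) : Prop :=
  ∀ u ∈ X, ∀ v ∈ X, ¬ G.Adj u v

/-- The mutual-visibility number `μ(G)`. -/
noncomputable def mu {V : Type*} (G : SimpleGraph V) : ℕ :=
  sSup {n | ∃ X : Set V, IsMVSet G X ∧ X.ncard = n}

/-- The independent mutual-visibility number `μᵢ(G)`. -/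
noncomputable def muI {V : Type*} (G : SimpleGraph V) : ℕ :=
  sSup {n | ∃ X : Set V, IsMVSet G X ∧ IsIndep G X ∧ X.ncard = n}

/-- The independence number `α(G)`. -/
noncomputable def indepNumber {V : Type*} (G : SimpleGraph V) : ℕ :=
  sSup {n | ∃ X : Set V, IsIndep G X ∧ X.ncard = n}

theorem dist_boxProd {V W : Type*} {G : SimpleGraph V} {H : SimpleGraph W}
    (hG : G.Connected) (hH : H.Connected) (x y : V × W) :
    (G □ H).dist x y = G.dist x.1 y.1 + H.dist x.2 y.2 := by
  rw [SimpleGraph.dist, edist_boxProd, ENat.toNat_add]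
  · rfl
  · exact edist_ne_top_iff_reachable.2 (hG _ _)
  · exact edist_ne_top_iff_reachable.2 (hH _ _)

section WalkBoxProd

variable {V W : Type*} {G : SimpleGraph V} {H : SimpleGraph W}

theorem length_walk_boxProdLeft {a a' : V} (b : W) (p : G.Walk a a') :
    (p.boxProdLeft H b).length = p.length :=
  Walk.length_map _ _

theorem length_walk_boxProdRight {b b' : W} (a : V) (q : H.Walk b b') :
    (q.boxProdRight G a).length = q.length :=
  Walk.length_map _ _

theorem mem_support_walk_boxProdLeft {a a' : V} {b : W} {p : G.Walk a a'} {z : V × W} :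
    z ∈ (p.boxProdLeft H b).support ↔ ∃ x ∈ p.support, (x, b) = z :=
  (congrArg (z ∈ ·) (Walk.support_map _ _)).to_iff.trans List.mem_map

theorem mem_support_walk_boxProdRight {b b' : W} {a : V} {q : H.Walk b b'} {z : V × W} :
    z ∈ (q.boxProdRight G a).support ↔ ∃ y ∈ q.support, (a, y) = z :=
  (congrArg (z ∈ ·) (Walk.support_map _ _)).to_iff.trans List.mem_map

end WalkBoxProd

/-- A walk whose length is the distance and which meets `X` only in its ends witnesses
visibility. -/
theorem visiblePair_of_walk {V : Type*} {G : SimpleGraph V} {X : Set V} {u v : V}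
    (p : G.Walk u v) (hp : p.length = G.dist u v)
    (hX : ∀ w ∈ p.support, w ∈ X → w = u ∨ w = v) : VisiblePair G X u v :=
  ⟨p, p.isPath_of_length_eq_dist hp, hp, hX⟩

theorem bddAbove_ncard_isMVSet {V : Type*} [Finite V] (G : SimpleGraph V) :
    BddAbove {n | ∃ X : Set V, IsMVSet G X ∧ X.ncard = n} := by
  refine ⟨Nat.card V, ?_⟩
  rintro n ⟨X, -, rfl⟩
  exact Set.ncard_le_card X

theorem IsMVSet.ncard_le_mu {V : Type*} [Finite V] {G : SimpleGraph V} {X : Set V}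
    (hX : IsMVSet G X) : X.ncard ≤ mu G :=
  le_csSup (bddAbove_ncard_isMVSet G) ⟨X, hX, rfl⟩

theorem exists_isMVSet_ncard_eq_mu {V : Type*} [Finite V] (G : SimpleGraph V) :
    ∃ X : Set V, IsMVSet G X ∧ X.ncard = mu G :=
  Nat.sSup_mem (s := {n | ∃ X : Set V, IsMVSet G X ∧ X.ncard = n})
    ⟨0, ∅, fun _ h ↦ absurd h (Set.notMem_empty _), Set.ncard_empty V⟩ (bddAbove_ncard_isMVSet G)

/-- In a tree, a mutual-visibility set containing two adjacent vertices contains nothing else. -/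
theorem IsMVSet.subset_pair_of_adj {V : Type*} {T : SimpleGraph V} (hT : T.IsTree)
    {X : Set V} (hX : IsMVSet T X) {u v : V} (hu : u ∈ X) (hv : v ∈ X) (huv : T.Adj u v) :
    X ⊆ {u, v} := by
  intro w hw
  by_contra hne
  simp only [Set.mem_insert_iff, Set.mem_singleton_iff, not_or] at hne
  obtain ⟨p, hp, -, hpX⟩ := hX w hw u hu hne.1
  obtain ⟨q, hq, -, hqX⟩ := hX w hw v hv hne.2
  have hvp : v ∉ p.support := fun h ↦
    (hpX v h hv).elim (fun h ↦ hne.2 h.symm) (fun h ↦ huv.ne h.symm)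
  have heq : (⟨q, hq⟩ : T.Path w v) = ⟨p.concat huv, hp.concat hvp huv⟩ :=
    (hT.isAcyclic.subsingleton_path _ _).elim _ _
  have huq : u ∈ q.support := by
    rw [show q = p.concat huv from congrArg Subtype.val heq, Walk.support_concat]
    simp
  exact (hqX u huq hu).elim (fun h ↦ hne.1 h.symm) huv.ne

theorem exists_ne_not_adj_of_isTree {V : Type*} [Fintype V] {T : SimpleGraph V}
    (hT : T.IsTree) (hc : 3 ≤ Fintype.card V) : ∃ u v, u ≠ v ∧ ¬ T.Adj u v := by
  by_contra! hadj
  obtain ⟨a, b, c, hab, hac, hbc⟩ := Fintype.two_lt_card_iff.1 hc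
  have hpath : (Walk.cons (hadj a b hab) (Walk.cons (hadj b c hbc) Walk.nil)).IsPath := by
    simp [hab, hac, hbc]
  have heq := (hT.isAcyclic.subsingleton_path a c).elim ⟨_, hpath⟩ (Path.singleton (hadj a c hac))
  have hlen := congrArg (fun p : T.Path a c ↦ p.1.length) heq
  simp [Path.singleton] at hlen

theorem isMVSet_pair {V : Type*} {G : SimpleGraph V} (hG : G.Connected) (u v : V) :
    IsMVSet G {u, v} := by
  intro x hx y hy hxy
  obtain ⟨p, hp⟩ := hG.exists_walk_length_eq_dist x y
  refine visiblePair_of_walk p hp fun w _ hw ↦ ?_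
  simp only [Set.mem_insert_iff, Set.mem_singleton_iff] at hx hy hw
  grind

/-- The mutual-visibility number of a tree of order at least `3` is attained by an independent
set. -/
theorem exists_isIndep_isMVSet_ncard_eq_mu {V : Type*} [Fintype V] {T : SimpleGraph V}
    (hT : T.IsTree) (hc : 3 ≤ Fintype.card V) :
    ∃ X : Set V, IsMVSet T X ∧ IsIndep T X ∧ X.ncard = mu T := by
  obtain ⟨X, hX, hcard⟩ := exists_isMVSet_ncard_eq_mu T
  by_cases hind : IsIndep T X
  · exact ⟨X, hX, hind, hcard⟩
  obtain ⟨u, hu, v, hv, huv⟩ : ∃ u ∈ X, ∃ v ∈ X, T.Adj u v := by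
    simpa [IsIndep] using hind
  have hXuv : X = {u, v} := (hX.subset_pair_of_adj hT hu hv huv).antisymm
    (Set.insert_subset hu (Set.singleton_subset_iff.2 hv))
  obtain ⟨a, b, hab, hnadj⟩ := exists_ne_not_adj_of_isTree hT hc
  refine ⟨{a, b}, isMVSet_pair hT.connected a b, ?_, ?_⟩
  · rintro x (rfl | rfl) y (rfl | rfl) <;> simp_all [T.adj_comm]
  · rw [← hcard, hXuv, Set.ncard_pair hab, Set.ncard_pair huv.ne]

/-- The product of independent mutual-visibility sets is a mutual-visibility set of the
Cartesian product. -/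
theorem IsMVSet.prod {V W : Type*} {G : SimpleGraph V} {H : SimpleGraph W}
    (hG : G.Connected) (hH : H.Connected) {X : Set V} {Y : Set W}
    (hX : IsMVSet G X) (hXi : IsIndep G X) (hY : IsMVSet H Y) :
    IsMVSet (G □ H) (X ×ˢ Y) := by
  rintro ⟨a, b⟩ ⟨ha, hb⟩ ⟨a', b'⟩ ⟨ha', hb'⟩ hne
  simp only at ha hb ha' hb'
  by_cases haa : a = a'
  · subst haa
    obtain ⟨q, -, hql, hqY⟩ := hY b hb b' hb' (by simpa using hne)
    refine visiblePair_of_walk (q.boxProdRight G a) ?_ ?_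
    · simp [length_walk_boxProdRight, hql, dist_boxProd hG hH]
    · simp only [mem_support_walk_boxProdRight]
      rintro _ ⟨y, hy, rfl⟩ ⟨-, hyY⟩
      exact (hqY y hy hyY).imp (congrArg _) (congrArg _)
  obtain ⟨p, hp, hpl, hpX⟩ := hX a ha a' ha' haa
  by_cases hbb : b = b'
  · subst hbb
    refine visiblePair_of_walk (p.boxProdLeft H b) ?_ ?_
    · simp [length_walk_boxProdLeft, hpl, dist_boxProd hG hH]
    · simp only [mem_support_walk_boxProdLeft]
      rintro _ ⟨x, hx, rfl⟩ ⟨hxX, -⟩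
      exact (hpX x hx hxX).imp (congrArg (·, b)) (congrArg (·, b))
  obtain ⟨q, -, hql, hqY⟩ := hY b hb b' hb' hbb
  cases p with
  | nil => exact absurd rfl haa
  | @cons _ c _ hac p =>
    have hcX : c ∉ X := fun hc ↦ hXi a ha c hc hac
    have hadj : (G □ H).Adj (a, b) (c, b) := boxProd_adj_left.2 hac
    refine visiblePair_of_walk
      (Walk.cons hadj ((q.boxProdRight G c).append (p.boxProdLeft H b'))) ?_ ?_
    · rw [dist_boxProd hG hH, ← hpl, ← hql]
      simp only [Walk.length_cons, Walk.length_append, length_walk_boxProdRight,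
        length_walk_boxProdLeft]
      omega
    · simp only [Walk.support_cons, List.mem_cons, Walk.mem_support_append_iff,
        mem_support_walk_boxProdRight, mem_support_walk_boxProdLeft]
      rintro _ (rfl | ⟨y, hy, rfl⟩ | ⟨x, hx, rfl⟩) ⟨hxX, -⟩
      · exact Or.inl rfl
      · exact absurd hxX hcX
      · have hxa : x ≠ a := fun h ↦ ((Walk.cons_isPath_iff hac p).1 hp).2 (h ▸ hx)
        refine Or.inr (congrArg (·, b') ?_)
        exact (hpX x (by simp [hx]) hxX).resolve_left hxa

theorem stmt9 {V W : Type*} [Fintype V] [Fintype W] (T₁ : SimpleGraph V)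
    (T₂ : SimpleGraph W) (h₁ : T₁.IsTree) (h₂ : T₂.IsTree)
    (hc₁ : 3 ≤ Fintype.card V) (hc₂ : 3 ≤ Fintype.card W) :
    mu T₁ * mu T₂ ≤ mu (T₁.boxProd T₂) := by
  obtain ⟨X, hX, hXi, hXc⟩ := exists_isIndep_isMVSet_ncard_eq_mu h₁ hc₁
  obtain ⟨Y, hY, hYc⟩ := exists_isMVSet_ncard_eq_mu T₂
  rw [← hXc, ← hYc, ← Set.ncard_prod]
  exact (hX.prod h₁.connected h₂.connected hXi hY).ncard_le_mu
end

section
/- If T is a tree with at least 3 vertices and L is its set of leaves, then L is a mutual-visibility set of T, L is an independent set, and μ(T) = |L| = μ_i(T). -/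
open SimpleGraph

/-- A shortest walk splits additively at each of its vertices. -/
lemma SimpleGraph.Connected.dist_add_dist_of_mem_support {V : Type*} {G : SimpleGraph V}
    (hG : G.Connected) {u v w : V} {p : G.Walk u v} (hp : p.length = G.dist u v)
    (hw : w ∈ p.support) : G.dist u w + G.dist w v = G.dist u v := by
  classical
  have h := congrArg Walk.length (p.take_spec hw)
  rw [Walk.length_append] at h
  have h₁ := dist_le (p.takeUntil w hw)
  have h₂ := dist_le (p.dropUntil w hw)
  have h₃ := hG.dist_triangle (u := u) (v := w) (w := v)
  omega

/-- In a tree the path between two vertices passes through every vertex metrically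
between them. -/
lemma SimpleGraph.IsTree.mem_support_of_dist_add_dist {V : Type*} {G : SimpleGraph V}
    (hG : G.IsTree) {u v w : V} {p : G.Walk u v} (hp : p.IsPath)
    (h : G.dist u w + G.dist w v = G.dist u v) : w ∈ p.support := by
  obtain ⟨q, hq⟩ := hG.connected.exists_walk_length_eq_dist u w
  obtain ⟨r, hr⟩ := hG.connected.exists_walk_length_eq_dist w v
  have hqr : (q.append r).IsPath :=
    Walk.isPath_of_length_eq_dist _ (by rw [Walk.length_append, hq, hr, h])
  rw [(hG.existsUnique_path u v).unique hp hqr, Walk.mem_support_append_iff]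
  exact Or.inl q.end_mem_support

/-- Two vertices between `r` and `l` in a tree are linearly ordered by distance from `r`. -/
lemma SimpleGraph.IsTree.between_or_between {V : Type*} {G : SimpleGraph V}
    (hG : G.IsTree) {r l x y : V} (hx : G.dist r x + G.dist x l = G.dist r l)
    (hy : G.dist r y + G.dist y l = G.dist r l) :
    G.dist r x + G.dist x y = G.dist r y ∨ G.dist r y + G.dist y x = G.dist r x := by
  obtain ⟨q, hq⟩ := hG.connected.exists_walk_length_eq_dist r x
  obtain ⟨s, hs⟩ := hG.connected.exists_walk_length_eq_dist x l
  have hqs : (q.append s).IsPath :=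
    Walk.isPath_of_length_eq_dist _ (by rw [Walk.length_append, hq, hs, hx])
  rcases (Walk.mem_support_append_iff q s).1 (hG.mem_support_of_dist_add_dist hqs hy) with h | h
  · exact Or.inr (hG.connected.dist_add_dist_of_mem_support hq h)
  · have := hG.connected.dist_add_dist_of_mem_support hs h
    omega

/-- The only neighbor of a vertex of degree one is one step closer to every other vertex. -/
lemma SimpleGraph.Connected.dist_eq_dist_add_one_of_degree_eq_one {V : Type*} [Fintype V]
    {G : SimpleGraph V} [DecidableRel G.Adj] (hG : G.Connected) {u v w : V}
    (hw : G.degree w = 1) (hv : G.Adj w v) (hu : u ≠ w) : G.dist w u = G.dist v u + 1 := by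
  obtain ⟨p, hp⟩ := hG.exists_walk_length_eq_dist w u
  cases p with
  | nil => exact absurd rfl hu
  | @cons _ n _ h q =>
    obtain rfl : n = v := (degree_eq_one_iff_existsUnique_adj.1 hw).unique h hv
    have h₁ := dist_le q
    have h₂ := hG.dist_triangle (u := w) (v := n) (w := u)
    rw [dist_eq_one_iff_adj.2 h] at h₂
    rw [Walk.length_cons] at hp
    omega

/-- No vertex of degree one lies strictly between two other vertices. -/
lemma SimpleGraph.Connected.eq_or_eq_of_degree_eq_one {V : Type*} [Fintype V]
    {G : SimpleGraph V} [DecidableRel G.Adj] (hG : G.Connected) {u v w : V}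
    (hw : G.degree w = 1) (h : G.dist u w + G.dist w v = G.dist u v) : w = u ∨ w = v := by
  by_contra! hne
  obtain ⟨n, hn, -⟩ := degree_eq_one_iff_existsUnique_adj.1 hw
  have h₁ := hG.dist_eq_dist_add_one_of_degree_eq_one hw hn hne.1.symm
  have h₂ := hG.dist_eq_dist_add_one_of_degree_eq_one hw hn hne.2.symm
  have h₃ := hG.dist_triangle (u := u) (v := n) (w := v)
  rw [dist_comm (u := w) (v := u), dist_comm (u := n) (v := u)] at h₁
  omega

/-- In a tree, at most one neighbor of a vertex is closer to a given vertex. -/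
lemma SimpleGraph.IsTree.eq_of_adj_of_dist_lt {V : Type*} {G : SimpleGraph V} (hG : G.IsTree)
    {b l m n : V} (hm : G.Adj m l) (hn : G.Adj n l) (hmd : G.dist b m < G.dist b l)
    (hnd : G.dist b n < G.dist b l) : m = n := by
  have key : ∀ k, G.Adj k l → G.dist b k < G.dist b l → G.dist b k + G.dist k l = G.dist b l := by
    intro k hk hd
    have h := hG.connected.dist_triangle (u := b) (v := k) (w := l)
    rw [dist_eq_one_iff_adj.2 hk] at h ⊢
    omega
  have hml := dist_eq_one_iff_adj.2 hm
  have hnl := dist_eq_one_iff_adj.2 hn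
  have h₁ := key m hm hmd
  have h₂ := key n hn hnd
  refine hG.connected.dist_eq_zero_iff.1 ?_
  rcases hG.between_or_between h₁ h₂ with h | h
  · omega
  · rw [dist_comm]; omega

/-- From `b`, the geodesic through a vertex `x ≠ b` of a finite tree extends to a leaf. -/
lemma SimpleGraph.IsTree.exists_degree_eq_one_of_ne {V : Type*} [Fintype V] {G : SimpleGraph V}
    [DecidableRel G.Adj] (hG : G.IsTree) {b x : V} (hb : b ≠ x) :
    ∃ l, G.degree l = 1 ∧ G.dist b x + G.dist x l = G.dist b l := by
  obtain ⟨l, hl, hmax⟩ := Set.exists_max_image {l | G.dist b x + G.dist x l = G.dist b l}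
    (G.dist b) (Set.toFinite _) ⟨x, by simp⟩
  refine ⟨l, ?_, hl⟩
  rw [Set.mem_ofPred_eq] at hl
  have hpos := hG.connected.pos_dist_of_ne hb
  have hcloser : ∀ m, G.Adj m l → G.dist b m < G.dist b l := by
    intro m hm
    by_contra! hlt
    have hd := hG.dist_eq_dist_add_one_of_adj b hm
    have h₁ := hG.connected.dist_triangle (u := b) (v := x) (w := m)
    have h₂ := hG.connected.dist_triangle (u := x) (v := l) (w := m)
    rw [dist_eq_one_iff_adj.2 hm.symm] at h₂
    have := hmax m (by rw [Set.mem_ofPred_eq]; omega)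
    omega
  have hlb : l ≠ b := by
    rintro rfl
    rw [SimpleGraph.dist_self] at hl
    omega
  have : Nontrivial V := ⟨l, b, hlb⟩
  obtain ⟨n, hn⟩ := hG.connected.preconnected.exists_adj_of_nontrivial l
  refine degree_eq_one_iff_existsUnique_adj.2 ⟨n, hn, fun m hm => ?_⟩
  exact hG.eq_of_adj_of_dist_lt hm.symm hn.symm (hcloser m hm.symm) (hcloser n hn.symm)

/-- In a tree, no member of a mutual-visibility set lies between two others. -/
lemma IsMVSet.not_between {V : Type*} {T : SimpleGraph V} (ht : T.IsTree) {X : Set V}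
    (hX : IsMVSet T X) {x y z : V} (hx : x ∈ X) (hy : y ∈ X) (hz : z ∈ X) (hxy : x ≠ y)
    (hyz : y ≠ z) : T.dist x y + T.dist y z ≠ T.dist x z := by
  intro h
  by_cases hxz : x = z
  · subst hxz
    have := ht.connected.pos_dist_of_ne hxy
    rw [SimpleGraph.dist_self] at h
    omega
  · obtain ⟨p, hp, -, hpX⟩ := hX x hx z hz hxz
    rcases hpX y (ht.mem_support_of_dist_add_dist hp h) hy with h | h
    · exact hxy h.symm
    · exact hyz h

/-- The leaves of a tree form a mutual-visibility set. -/
lemma SimpleGraph.IsTree.isMVSet_leaves {V : Type*} [Fintype V] {T : SimpleGraph V}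
    [DecidableRel T.Adj] (ht : T.IsTree) : IsMVSet T {v | T.degree v = 1} := by
  intro u _ v _ _
  obtain ⟨p, hp, hd⟩ := ht.connected.exists_path_of_dist u v
  exact ⟨p, hp, hd, fun w hw hwX => ht.connected.eq_or_eq_of_degree_eq_one hwX
    (ht.connected.dist_add_dist_of_mem_support hd hw)⟩

/-- The leaves of a connected graph on at least three vertices are pairwise nonadjacent. -/
lemma SimpleGraph.Connected.isIndep_leaves {V : Type*} [Fintype V] {G : SimpleGraph V}
    [DecidableRel G.Adj] (hG : G.Connected) (h3 : 3 ≤ Fintype.card V) :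
    IsIndep G {v | G.degree v = 1} := by
  classical
  intro u hu v hv huv
  obtain ⟨z, hz⟩ : ∃ z, z ∉ ({u, v} : Finset V) := by
    by_contra! h
    have h₁ := Finset.card_le_card (fun x _ => h x : (Finset.univ : Finset V) ⊆ {u, v})
    have h₂ := Finset.card_le_two (a := u) (b := v)
    rw [Finset.card_univ] at h₁
    omega
  simp only [Finset.mem_insert, Finset.mem_singleton, not_or] at hz
  have h₁ := hG.dist_eq_dist_add_one_of_degree_eq_one hu huv hz.1
  have h₂ := hG.dist_eq_dist_add_one_of_degree_eq_one hv huv.symm hz.2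
  omega

/-- A mutual-visibility set of a tree has at most as many elements as the tree has leaves. -/
lemma IsMVSet.ncard_le_ncard_leaves {V : Type*} [Fintype V] [Nontrivial V] {T : SimpleGraph V}
    [DecidableRel T.Adj] (ht : T.IsTree) {X : Set V} (hX : IsMVSet T X) :
    X.ncard ≤ {v | T.degree v = 1}.ncard := by
  classical
  rcases X.subsingleton_or_nontrivial with hs | ⟨r, hr, s, hs, hrs⟩
  · obtain ⟨v, hv⟩ := ht.exists_vert_degree_one_of_nontrivial
    exact (Set.ncard_le_one_iff_subsingleton.2 hs).trans
      ((Set.ncard_pos (Set.toFinite _)).2 ⟨v, hv⟩)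
  · have hbase : ∀ x, (if x = r then s else r) ≠ x := by
      intro x
      split_ifs with h
      · exact fun h' => hrs (h.symm.trans h'.symm)
      · exact Ne.symm h
    choose l hl hbl using fun x => ht.exists_degree_eq_one_of_ne (hbase x)
    have hroot : ∀ x ∈ X, x ≠ r → l x ≠ l r := by
      intro x hx hxr h
      have h₁ := hbl x
      have h₂ := hbl r
      rw [if_neg hxr, h] at h₁
      rw [if_pos rfl] at h₂
      refine hX.not_between ht hs hr hx hrs.symm hxr.symm ?_
      have h₃ := ht.connected.dist_triangle (u := s) (v := r) (w := x)
      have h₄ := ht.connected.dist_triangle (u := s) (v := x) (w := l r)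
      omega
    refine Set.ncard_le_ncard_of_injOn l (fun x _ => hl x) ?_ (Set.toFinite _)
    intro x hx y hy h
    by_contra hxy
    by_cases hxr : x = r
    · subst hxr
      exact hroot y hy (Ne.symm hxy) h.symm
    by_cases hyr : y = r
    · subst hyr
      exact hroot x hx hxy h
    have h₁ := hbl x
    have h₂ := hbl y
    rw [if_neg hxr, h] at h₁
    rw [if_neg hyr] at h₂
    rcases ht.between_or_between h₁ h₂ with h₃ | h₃
    · exact hX.not_between ht hr hx hy (Ne.symm hxr) hxy h₃
    · exact hX.not_between ht hr hy hx (Ne.symm hyr) (Ne.symm hxy) h₃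

theorem stmt10 {V : Type*} [Fintype V] (T : SimpleGraph V) [DecidableRel T.Adj]
    (ht : T.IsTree) (h3 : 3 ≤ Fintype.card V) :
    IsMVSet T {v | T.degree v = 1} ∧ IsIndep T {v | T.degree v = 1} ∧
    mu T = {v | T.degree v = 1}.ncard ∧ muI T = {v | T.degree v = 1}.ncard := by
  have : Nontrivial V := Fintype.one_lt_card_iff_nontrivial.1 (by omega)
  have hL := ht.isMVSet_leaves
  have hI := ht.connected.isIndep_leaves h3
  refine ⟨hL, hI, IsGreatest.csSup_eq ⟨⟨_, hL, rfl⟩, ?_⟩,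
    IsGreatest.csSup_eq ⟨⟨_, hL, hI, rfl⟩, ?_⟩⟩
  · rintro _ ⟨X, hX, rfl⟩
    exact hX.ncard_le_ncard_leaves ht
  · rintro _ ⟨X, hX, -, rfl⟩
    exact hX.ncard_le_ncard_leaves ht
end

section
/- If G is a frog graph (a cycle C with two paths attached at two antipodal vertices of C), then μ(G) = 3. -/
open SimpleGraph

/-- The frog graph built from a cycle on `n ≥ 3` vertices with tails of `a` and `b`
extra vertices attached at the antipodal cycle vertices `0` and `⌊n/2⌋`. -/
def frogGraph (n a b : ℕ) : SimpleGraph (Fin n ⊕ (Fin a ⊕ Fin b)) :=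
  SimpleGraph.fromRel (fun x y =>
    match x, y with
    | Sum.inl i, Sum.inl j => (j : ℕ) = ((i : ℕ) + 1) % n
    | Sum.inl i, Sum.inr (Sum.inl k) => (i : ℕ) = 0 ∧ (k : ℕ) = 0
    | Sum.inl i, Sum.inr (Sum.inr k) => (i : ℕ) = n / 2 ∧ (k : ℕ) = 0
    | Sum.inr (Sum.inl k), Sum.inr (Sum.inl l) => (l : ℕ) = (k : ℕ) + 1
    | Sum.inr (Sum.inr k), Sum.inr (Sum.inr l) => (l : ℕ) = (k : ℕ) + 1
    | _, _ => False)

/-- `G` is a frog graph: a cycle with two (possibly trivial) paths attached at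
two antipodal vertices of the cycle. -/
def IsFrog {V : Type*} (G : SimpleGraph V) : Prop :=
  ∃ (n a b : ℕ), 3 ≤ n ∧ Nonempty (G ≃g frogGraph n a b)

/-! ### Walks, potentials and invariants -/

section Walks

variable {V W : Type*} {G : SimpleGraph V} {H : SimpleGraph W}

/-- A property preserved along the edges inside `S` propagates along walks inside `S`. -/
theorem walk_invariant {S T : V → Prop}
    (hT : ∀ x y, G.Adj x y → S x → S y → T x → T y) {u v : V} (p : G.Walk u v)
    (hS : ∀ w ∈ p.support, S w) (hu : T u) : T v := by
  induction p with
  | nil => exact hu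
  | cons h p ih =>
    simp only [Walk.support_cons, List.mem_cons, forall_eq_or_imp] at hS
    exact ih hS.2 (hT _ _ h hS.1 (hS.2 _ p.start_mem_support) hu)

/-- A potential growing by at most one along the edges inside `S` bounds from below the length
of walks inside `S`. -/
theorem potential_le_length {S : V → Prop} {f : V → ℤ}
    (hf : ∀ x y, G.Adj x y → S x → S y → f y ≤ f x + 1) {u v : V} (p : G.Walk u v)
    (hS : ∀ w ∈ p.support, S w) : f v ≤ f u + p.length := by
  induction p with
  | nil => simp
  | cons h p ih =>
    simp only [Walk.support_cons, List.mem_cons, forall_eq_or_imp] at hS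
    have h₁ := ih hS.2
    have h₂ := hf _ _ h hS.1 (hS.2 _ p.start_mem_support)
    rw [Walk.length_cons]
    push_cast
    linarith

theorem VisiblePair.symm {X : Set V} {u v : V} (h : VisiblePair G X u v) :
    VisiblePair G X v u := by
  obtain ⟨p, hp, hl, hs⟩ := h
  refine ⟨p.reverse, hp.reverse, by rw [Walk.length_reverse, hl, dist_comm], fun w hw hX => ?_⟩
  rw [Walk.support_reverse, List.mem_reverse] at hw
  exact (hs w hw hX).symm

theorem IsMVSet.image {X : Set V} (hX : IsMVSet G X) (e : G ≃g H) : IsMVSet H (e '' X) := by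
  rintro _ ⟨u, hu, rfl⟩ _ ⟨v, hv, rfl⟩ hne
  obtain ⟨p, -, hl, hs⟩ := hX u hu v hv fun h => hne (h ▸ rfl)
  have hlen : (p.map e.toHom).length = H.dist (e u) (e v) := by
    apply le_antisymm _ (dist_le _)
    obtain ⟨q, hq⟩ := (p.map e.toHom).reachable.exists_walk_length_eq_dist
    have h := dist_le ((q.map e.symm.toHom).copy (e.symm_apply_apply u) (e.symm_apply_apply v))
    rw [Walk.length_copy, Walk.length_map] at h
    rw [Walk.length_map, hl]
    exact h.trans hq.le
  refine ⟨p.map e.toHom, Walk.isPath_of_length_eq_dist _ hlen, hlen, ?_⟩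
  intro w hw hwX
  rw [Walk.support_map, List.mem_map] at hw
  obtain ⟨w, hw, rfl⟩ := hw
  obtain ⟨x, hx, hxw⟩ := hwX
  obtain rfl : x = w := e.injective hxw
  exact (hs x hw hx).imp (congrArg e) (congrArg e)

end Walks

/-! ### Coordinates on the frog graph -/

namespace frogGraph

variable {n a b : ℕ}

/-- The cycle vertex at which the component containing a vertex is attached. -/
def pos : Fin n ⊕ (Fin a ⊕ Fin b) → ℕ
  | Sum.inl i => i
  | Sum.inr (Sum.inl _) => 0
  | Sum.inr (Sum.inr _) => n / 2

/-- The distance of a vertex to the cycle. -/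
def height : Fin n ⊕ (Fin a ⊕ Fin b) → ℕ
  | Sum.inl _ => 0
  | Sum.inr (Sum.inl k) => k + 1
  | Sum.inr (Sum.inr k) => k + 1

theorem pos_lt (hn : 3 ≤ n) (x : Fin n ⊕ (Fin a ⊕ Fin b)) : pos x < n := by
  rcases x with i | k | k <;> simp only [pos] <;> omega

theorem height_eq_zero_or_pos_eq (x : Fin n ⊕ (Fin a ⊕ Fin b)) :
    height x = 0 ∨ pos x = 0 ∨ pos x = n / 2 := by
  rcases x with i | k | k <;> simp [pos, height]

theorem ext_pos_height (hn : 3 ≤ n) {x y : Fin n ⊕ (Fin a ⊕ Fin b)} (hp : pos x = pos y)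
    (hh : height x = height y) : x = y := by
  rcases x with i | k | k <;> rcases y with j | l | l <;> simp only [pos, height] at hp hh <;>
    first
      | omega
      | (simp only [Sum.inl.injEq, Sum.inr.injEq, Fin.ext_iff]; omega)

theorem adj_cases (hn : 3 ≤ n) {x y : Fin n ⊕ (Fin a ⊕ Fin b)} (h : (frogGraph n a b).Adj x y) :
    (height x = 0 ∧ height y = 0 ∧ (pos y = pos x + 1 ∨ pos x = pos y + 1 ∨
      (pos x = 0 ∧ pos y = n - 1) ∨ (pos y = 0 ∧ pos x = n - 1))) ∨
    (pos x = pos y ∧ (height y = height x + 1 ∨ height x = height y + 1)) := by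
  have mod_cases : ∀ i : Fin n, ((i : ℕ) + 1) % n = i + 1 ∨
      ((i : ℕ) + 1) % n = 0 ∧ (i : ℕ) = n - 1 := by
    intro i
    rcases Nat.lt_or_ge ((i : ℕ) + 1) n with h | h
    · exact Or.inl (Nat.mod_eq_of_lt h)
    · have : (i : ℕ) + 1 = n := by omega
      exact Or.inr ⟨by rw [this, Nat.mod_self], by omega⟩
  rcases x with i | k | k <;> rcases y with j | l | l <;>
    replace h := ((fromRel_adj _ _ _).1 h).2 <;>
    simp only [pos, height, true_and, or_false, false_or] at h ⊢
  · have := mod_cases i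
    have := mod_cases j
    omega
  all_goals omega

theorem adj_cycle (hn : 3 ≤ n) {i j : Fin n} (h : (j : ℕ) = i + 1 ∨ (j : ℕ) = 0 ∧ (i : ℕ) = n - 1) :
    (frogGraph n a b).Adj (Sum.inl i) (Sum.inl j) := by
  simp only [frogGraph, fromRel_adj, ne_eq, Sum.inl.injEq, Fin.ext_iff]
  refine ⟨by omega, Or.inl ?_⟩
  rcases h with h | ⟨h, h'⟩
  · rw [h, Nat.mod_eq_of_lt (by omega)]
  · rw [h, h', Nat.sub_add_cancel (by omega), Nat.mod_self]

/-- The increasing arc of the cycle between two of its vertices. -/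
theorem exists_arc (hn : 3 ≤ n) (i : Fin n) (d : ℕ) (j : Fin n) (hj : (j : ℕ) = i + d) :
    ∃ p : (frogGraph n a b).Walk (Sum.inl i) (Sum.inl j), p.length = d ∧
      ∀ w ∈ p.support, height w = 0 ∧ (i : ℕ) ≤ pos w ∧ pos w ≤ j := by
  induction d generalizing i with
  | zero =>
    obtain rfl : i = j := Fin.ext (by omega)
    exact ⟨Walk.nil, rfl, by simp [height, pos]⟩
  | succ d ih =>
    obtain ⟨p, hl, hs⟩ := ih ⟨i + 1, by omega⟩ (by simp only; omega)
    refine ⟨Walk.cons (adj_cycle hn (Or.inl rfl)) p, by simp [hl], ?_⟩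
    intro w hw
    rcases List.mem_cons.1 (Walk.support_cons _ p ▸ hw) with rfl | hw
    · exact ⟨rfl, le_rfl, by simp only [pos]; omega⟩
    · have := hs w hw
      simp only at this
      omega

/-- The walk along the first tail down to the cycle. -/
theorem exists_tail_walk (hn : 3 ≤ n) (h : ℕ) (x : Fin n ⊕ (Fin a ⊕ Fin b)) (hp : pos x = 0)
    (hh : height x = h) :
    ∃ p : (frogGraph n a b).Walk x (Sum.inl ⟨0, by omega⟩), p.length = h := by
  induction h generalizing x with
  | zero =>
    have hx : x = Sum.inl ⟨0, by omega⟩ := ext_pos_height hn (by simpa [pos] using hp) hh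
    exact ⟨Walk.nil.copy hx.symm rfl, by simp⟩
  | succ h ih =>
    rcases x with i | k | k <;> simp only [pos, height] at hp hh
    · omega
    · rcases Nat.eq_zero_or_pos h with rfl | hpos
      · have e : (frogGraph n a b).Adj (Sum.inr (Sum.inl k)) (Sum.inl ⟨0, by omega⟩) :=
          (fromRel_adj _ _ _).2 ⟨by simp, Or.inr ⟨rfl, by omega⟩⟩
        exact ⟨Walk.cons e Walk.nil, by simp⟩
      · obtain ⟨p, hl⟩ := ih (Sum.inr (Sum.inl ⟨h - 1, by omega⟩)) rfl (by simp only [height]; omega)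
        have e : (frogGraph n a b).Adj (Sum.inr (Sum.inl k))
            (Sum.inr (Sum.inl ⟨h - 1, by omega⟩)) := by
          refine (fromRel_adj _ _ _).2 ⟨?_, Or.inr (by simp only; omega)⟩
          simp only [ne_eq, Sum.inl.injEq, Sum.inr.injEq, Fin.ext_iff]
          omega
        exact ⟨Walk.cons e p, by simp [hl]⟩
    · omega

theorem eq_inl (hn : 3 ≤ n) {x : Fin n ⊕ (Fin a ⊕ Fin b)} (h : height x = 0) :
    x = Sum.inl ⟨pos x, pos_lt hn x⟩ :=
  ext_pos_height hn rfl h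

theorem dist_le_pos_add_height (hn : 3 ≤ n) {x y : Fin n ⊕ (Fin a ⊕ Fin b)} (hx : pos x = 0)
    (hy : height y = 0) : (frogGraph n a b).dist x y ≤ pos y + height x := by
  obtain ⟨p, hp⟩ := exists_tail_walk hn _ x hx rfl
  obtain ⟨q, hq, -⟩ := exists_arc (a := a) (b := b) hn ⟨0, by omega⟩ (pos y) ⟨pos y, pos_lt hn y⟩
    (by simp)
  rw [eq_inl hn hy]
  refine (dist_le (p.append q)).trans ?_
  rw [Walk.length_append, hp, hq]
  simp only [pos]
  omega

theorem dist_le_sub_pos_add_height (hn : 3 ≤ n) {x y : Fin n ⊕ (Fin a ⊕ Fin b)} (hx : pos x = 0)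
    (hy : height y = 0) : (frogGraph n a b).dist x y ≤ n - pos y + height x := by
  have hlt := pos_lt hn y
  obtain ⟨p, hp⟩ := exists_tail_walk hn _ x hx rfl
  obtain ⟨q, hq, -⟩ := exists_arc (a := a) (b := b) hn ⟨pos y, hlt⟩ (n - 1 - pos y)
    ⟨n - 1, by omega⟩ (by simp only; omega)
  have e : (frogGraph n a b).Adj (Sum.inl ⟨n - 1, by omega⟩) (Sum.inl ⟨0, by omega⟩) :=
    adj_cycle hn (Or.inr ⟨rfl, rfl⟩)
  rw [eq_inl hn hy]
  refine (dist_le (p.append (Walk.cons e.symm q.reverse))).trans ?_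
  rw [Walk.length_append, hp, Walk.length_cons, Walk.length_reverse, hq]
  change height x + (n - 1 - pos y + 1) ≤ n - pos y + height x
  omega

/-! ### Lower bound -/

theorem visiblePair_of_arc (hn : 3 ≤ n) {X : Set (Fin n ⊕ (Fin a ⊕ Fin b))} {i j : Fin n}
    (hij : i ≤ j) (h : (j : ℕ) = n / 2 ∨ (i : ℕ) = n / 2)
    (hX : ∀ w ∈ X, height w = 0 → (i : ℕ) ≤ pos w → pos w ≤ j →
      w = Sum.inl i ∨ w = Sum.inl j) :
    VisiblePair (frogGraph n a b) X (Sum.inl i) (Sum.inl j) := by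
  have hij' : (i : ℕ) ≤ j := hij
  obtain ⟨p, hl, hs⟩ := exists_arc (a := a) (b := b) hn i (j - i) j (by omega)
  have hlen : p.length = (frogGraph n a b).dist (Sum.inl i) (Sum.inl j) := by
    apply le_antisymm _ (dist_le p)
    obtain ⟨q, hq⟩ := p.reachable.exists_walk_length_eq_dist
    have hf : ∀ x y, (frogGraph n a b).Adj x y →
        (((pos y : ℤ) - (n / 2 : ℕ)).natAbs : ℤ) ≤ ((pos x : ℤ) - (n / 2 : ℕ)).natAbs + 1 := by
      intro x y hxy
      have := adj_cases hn hxy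
      omega
    have h₁ := potential_le_length (S := fun _ => True) (fun x y hxy _ _ => hf x y hxy) q
      (fun _ _ => trivial)
    have h₂ := potential_le_length (S := fun _ => True) (fun x y hxy _ _ => hf x y hxy) q.reverse
      (fun _ _ => trivial)
    rw [Walk.length_reverse] at h₂
    simp only [pos] at h₁ h₂
    omega
  refine ⟨p, Walk.isPath_of_length_eq_dist _ hlen, hlen, fun w hw hwX => ?_⟩
  obtain ⟨h₁, h₂, h₃⟩ := hs w hw
  exact hX w hwX h₁ h₂ h₃

theorem exists_isMVSet_ncard_eq_three (hn : 3 ≤ n) :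
    ∃ X, IsMVSet (frogGraph n a b) X ∧ X.ncard = 3 := by
  let i : Fin n := ⟨0, by omega⟩
  let j : Fin n := ⟨n / 2, by omega⟩
  let k : Fin n := ⟨n - 1, by omega⟩
  let X : Set (Fin n ⊕ (Fin a ⊕ Fin b)) := {Sum.inl i, Sum.inl j, Sum.inl k}
  have hij : VisiblePair (frogGraph n a b) X (Sum.inl i) (Sum.inl j) := by
    refine visiblePair_of_arc hn (Fin.mk_le_mk.2 (by omega)) (Or.inl rfl) ?_
    rintro w (rfl | rfl | rfl) - h₁ h₂
    · exact Or.inl rfl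
    · exact Or.inr rfl
    · simp only [pos, i, j, k] at h₁ h₂
      omega
  have hjk : VisiblePair (frogGraph n a b) X (Sum.inl j) (Sum.inl k) := by
    refine visiblePair_of_arc hn (Fin.mk_le_mk.2 (by omega)) (Or.inr rfl) ?_
    rintro w (rfl | rfl | rfl) - h₁ h₂
    · simp only [pos, i, j, k] at h₁ h₂
      omega
    · exact Or.inl rfl
    · exact Or.inr rfl
  have hki : VisiblePair (frogGraph n a b) X (Sum.inl k) (Sum.inl i) := by
    have e : (frogGraph n a b).Adj (Sum.inl k) (Sum.inl i) := adj_cycle hn (Or.inr ⟨rfl, rfl⟩)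
    have hlen : e.toWalk.length = (frogGraph n a b).dist (Sum.inl k) (Sum.inl i) := by
      rw [dist_eq_one_iff_adj.2 e, Walk.length_cons, Walk.length_nil]
    exact ⟨e.toWalk, Walk.isPath_of_length_eq_dist _ hlen, hlen, fun w hw _ => by simpa using hw⟩
  refine ⟨X, ?_, ?_⟩
  · rintro u (rfl | rfl | rfl) v (rfl | rfl | rfl) hne
    exacts [absurd rfl hne, hij, hki.symm, hij.symm, absurd rfl hne, hjk, hki, hjk.symm,
      absurd rfl hne]
  · refine Set.ncard_eq_three.2 ⟨_, _, _, ?_, ?_, ?_, rfl⟩ <;>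
      simp only [ne_eq, Sum.inl.injEq, Fin.ext_iff, i, j, k] <;> omega

/-! ### Upper bound -/

variable {X : Set (Fin n ⊕ (Fin a ⊕ Fin b))}

/-- On the part of the graph hanging above one cycle vertex, a vertex separates what is above it
from the rest. -/
theorem not_visiblePair_of_above (hn : 3 ≤ n) {u v w : Fin n ⊕ (Fin a ⊕ Fin b)} (hw : w ∈ X)
    (hu : pos u = pos w ∧ height w < height u) (hv : ¬(pos v = pos w ∧ height w < height v))
    (hvw : v ≠ w) : ¬VisiblePair (frogGraph n a b) X u v := by
  rintro ⟨p, -, -, hs⟩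
  have huw : u ≠ w := by rintro rfl; omega
  refine hv (walk_invariant (S := fun x => x ≠ w)
    (T := fun x => pos x = pos w ∧ height w < height x) ?_ p ?_ hu)
  · intro x y hxy _ hy hx
    have h₁ := adj_cases hn hxy
    have h₂ : ¬(pos y = pos w ∧ height y = height w) := fun h => hy (ext_pos_height hn h.1 h.2)
    omega
  · rintro x hx rfl
    exact (hs x hx hw).elim huw.symm hvw.symm

theorem injOn_pos (hn : 3 ≤ n) (hX : IsMVSet (frogGraph n a b) X) (hc : 3 ≤ X.ncard) :
    Set.InjOn pos X := by
  have key : ∀ u ∈ X, ∀ v ∈ X, pos u = pos v → ¬height u < height v := by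
    intro u hu v hv hp hh
    have huv : v ≠ u := by rintro rfl; omega
    obtain ⟨w, hw, hne⟩ : ∃ w ∈ X, w ∉ ({u, v} : Set _) := by
      apply Set.exists_mem_notMem_of_ncard_lt_ncard (_ : _ < X.ncard)
      rw [Set.ncard_pair huv.symm]
      omega
    simp only [Set.mem_insert_iff, Set.mem_singleton_iff, not_or] at hne
    have hwv : ¬(pos w = pos v ∧ height w = height v) :=
      fun h => hne.2 (ext_pos_height hn h.1 h.2)
    have hwu : ¬(pos w = pos u ∧ height w = height u) :=
      fun h => hne.1 (ext_pos_height hn h.1 h.2)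
    by_cases h₁ : pos w = pos u ∧ height u < height w
    · by_cases h₂ : height v < height w
      · exact not_visiblePair_of_above hn hv (u := w) (v := u) (by omega) (by omega) huv.symm
          (hX w hw u hu hne.1)
      · exact not_visiblePair_of_above hn hw (u := v) (v := u) (by omega) (by omega)
          (Ne.symm hne.1) (hX v hv u hu huv)
    · exact not_visiblePair_of_above hn hu (u := v) (v := w) (by omega) h₁ hne.1
          (hX v hv w hw (Ne.symm hne.2))
  intro u hu v hv hp
  have h₁ := key u hu v hv hp
  have h₂ := key v hv u hu hp.symm
  exact ext_pos_height hn hp (by omega)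

/-- Two cycle vertices separate the two sides of the frog between them. -/
theorem not_visiblePair_of_between (hn : 3 ≤ n) {u v x y : Fin n ⊕ (Fin a ⊕ Fin b)}
    (hx : x ∈ X) (hy : y ∈ X) (hhx : height x = 0) (hhy : height y = 0)
    (hu : pos u < pos x ∨ pos y < pos u) (hxv : pos x < pos v) (hvy : pos v < pos y) :
    ¬VisiblePair (frogGraph n a b) X v u := by
  rintro ⟨p, -, -, hs⟩
  have h := walk_invariant (S := fun z => z ≠ x ∧ z ≠ y)
    (T := fun z => pos x < pos z ∧ pos z < pos y) ?_ p ?_ ⟨hxv, hvy⟩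
  · omega
  · intro z w hzw _ hw hz
    have h₁ := adj_cases hn hzw
    have h₂ : ¬(pos w = pos x ∧ height w = height x) :=
      fun h => hw.1 (ext_pos_height hn h.1 h.2)
    have h₃ : ¬(pos w = pos y ∧ height w = height y) :=
      fun h => hw.2 (ext_pos_height hn h.1 h.2)
    have h₄ := pos_lt hn y
    omega
  · intro z hz
    refine ⟨?_, ?_⟩ <;> rintro rfl
    · rcases hs z hz hx with rfl | rfl <;> omega
    · rcases hs z hz hy with rfl | rfl <;> omega

/-- Seen from the first tail, the nearer of two vertices on the first half of the cycle hides the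
farther one. -/
theorem not_visiblePair_of_lt_half (hn : 3 ≤ n) {u x y : Fin n ⊕ (Fin a ⊕ Fin b)}
    (hx : x ∈ X) (hu : pos u = 0) (hhx : height x = 0) (hhy : height y = 0)
    (hx₀ : 0 < pos x) (hxy : pos x < pos y) (hy : pos y < n / 2) :
    ¬VisiblePair (frogGraph n a b) X u y := by
  rintro ⟨p, -, hl, hs⟩
  have hd := dist_le_pos_add_height hn hu hhy
  have h := potential_le_length (S := fun z => z ≠ x)
    (f := fun z => if pos z = 0 then -(height z : ℤ) else
      if pos z < pos x then 0 else (n : ℤ) - pos z) ?_ p ?_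
  · simp only [hu, if_true] at h
    rw [if_neg (by omega), if_neg (by omega)] at h
    omega
  · intro z w hzw hz hw
    have h₁ := adj_cases hn hzw
    have h₂ : ¬(pos w = pos x ∧ height w = height x) := fun h => hw (ext_pos_height hn h.1 h.2)
    have h₃ : ¬(pos z = pos x ∧ height z = height x) := fun h => hz (ext_pos_height hn h.1 h.2)
    have h₄ := pos_lt hn z
    have h₅ := pos_lt hn w
    have h₆ := height_eq_zero_or_pos_eq z
    have h₇ := height_eq_zero_or_pos_eq w
    split_ifs <;> omega
  · rintro z hz rfl
    rcases hs z hz hx with rfl | rfl <;> omega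

/-- Seen from the first tail, the nearer of two vertices on the second half of the cycle hides the
farther one. -/
theorem not_visiblePair_of_half_lt (hn : 3 ≤ n) {u x y : Fin n ⊕ (Fin a ⊕ Fin b)}
    (hy : y ∈ X) (hu : pos u = 0) (hhx : height x = 0) (hhy : height y = 0)
    (hx : n / 2 < pos x) (hxy : pos x < pos y) :
    ¬VisiblePair (frogGraph n a b) X u x := by
  rintro ⟨p, -, hl, hs⟩
  have hd := dist_le_sub_pos_add_height hn hu hhx
  have hlt := pos_lt hn x
  have hlt' := pos_lt hn y
  have h := potential_le_length (S := fun z => z ≠ y)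
    (f := fun z => if pos z = 0 then -(height z : ℤ) else
      if pos y < pos z then 0 else (pos z : ℤ)) ?_ p ?_
  · simp only [hu, if_true] at h
    rw [if_neg (by omega), if_neg (by omega)] at h
    omega
  · intro z w hzw hz hw
    have h₁ := adj_cases hn hzw
    have h₂ : ¬(pos w = pos y ∧ height w = height y) := fun h => hw (ext_pos_height hn h.1 h.2)
    have h₃ : ¬(pos z = pos y ∧ height z = height y) := fun h => hz (ext_pos_height hn h.1 h.2)
    have h₄ := pos_lt hn z
    have h₅ := pos_lt hn w
    have h₆ := height_eq_zero_or_pos_eq z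
    have h₇ := height_eq_zero_or_pos_eq w
    split_ifs <;> omega
  · rintro z hz rfl
    rcases hs z hz hy with rfl | rfl <;> omega

theorem ncard_le_three (hn : 3 ≤ n) (hX : IsMVSet (frogGraph n a b) X) : X.ncard ≤ 3 := by
  by_contra! hc
  have hinj := injOn_pos hn hX hc.le
  have hcard : 4 ≤ (X.toFinite.toFinset.image pos).card := by
    rw [Finset.card_image_of_injOn (by simpa using hinj), ← Set.ncard_eq_toFinset_card X]
    exact hc
  obtain ⟨s, hs, hs₄⟩ := Finset.exists_subset_card_eq hcard
  have hmem : ∀ i, ∃ x ∈ X, pos x = s.orderEmbOfFin hs₄ i := fun i => by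
    simpa using hs (s.orderEmbOfFin_mem hs₄ i)
  choose x hxX hx using hmem
  have hlt : ∀ i j, i < j → pos (x i) < pos (x j) := fun i j hij => by
    rw [hx, hx]
    exact (s.orderEmbOfFin hs₄).strictMono hij
  have hvis : ∀ i j, i ≠ j → VisiblePair (frogGraph n a b) X (x i) (x j) := fun i j hij => by
    refine hX _ (hxX i) _ (hxX j) fun h => ?_
    rcases lt_or_gt_of_ne hij with h' | h'
    · exact (hlt i j h').ne (congrArg pos h)
    · exact (hlt j i h').ne (congrArg pos h.symm)
  have h₀₁ := hlt 0 1 (by decide)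
  have h₁₂ := hlt 1 2 (by decide)
  have h₂₃ := hlt 2 3 (by decide)
  have hpos := fun i => height_eq_zero_or_pos_eq (x i)
  have hp₀ := hpos 0
  have hp₁ := hpos 1
  have hp₂ := hpos 2
  have hp₃ := hpos 3
  by_cases heven : height (x 1) = 0 ∧ height (x 3) = 0
  · exact not_visiblePair_of_between hn (hxX 1) (hxX 3) heven.1 heven.2 (Or.inl h₀₁) h₁₂ h₂₃
      (hvis 2 0 (by decide))
  by_cases hodd : height (x 0) = 0 ∧ height (x 2) = 0
  · exact not_visiblePair_of_between hn (hxX 0) (hxX 2) hodd.1 hodd.2 (Or.inr h₂₃) h₀₁ h₁₂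
      (hvis 1 3 (by decide))
  have hu : pos (x 0) = 0 := by omega
  by_cases h₃ : height (x 3) = 0
  · exact not_visiblePair_of_half_lt hn (hxX 3) hu (by omega) h₃ (by omega) h₂₃
      (hvis 0 2 (by decide))
  · exact not_visiblePair_of_lt_half hn (hxX 1) hu (by omega) (by omega) (by omega) h₁₂ (by omega)
      (hvis 0 2 (by decide))

end frogGraph

theorem stmt16 {V : Type*} [Fintype V] (G : SimpleGraph V) (h : IsFrog G) :
    mu G = 3 := by
  obtain ⟨n, a, b, hn, ⟨e⟩⟩ := h
  refine IsGreatest.csSup_eq ⟨?_, ?_⟩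
  · obtain ⟨X, hX, hc⟩ := frogGraph.exists_isMVSet_ncard_eq_three (a := a) (b := b) hn
    exact ⟨_, hX.image e.symm, by rw [Set.ncard_image_of_injective _ e.symm.injective, hc]⟩
  · rintro _ ⟨X, hX, rfl⟩
    rw [← Set.ncard_image_of_injective X e.injective]
    exact frogGraph.ncard_le_three hn (hX.image e)
end
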